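/- arXiv:2301.13354 — 3 statements merged into one kernel-verified Lean document; each statement's English description precedes it below -/
import Mathlib

section
/- Let ν₁ and ν₂ be finite Borel measures on [0,1]^d and define the cumulative-distribution-type function Q̃(x) = ν₁({u ∈ [0,1]^d : u ≤ x}) − ν₂({u ∈ [0,1]^d : u ≤ x}) for x ∈ [0,1]^d. Then for every integer k ≥ 1 and every x ∈ [0,1]^d, the k-fold primitive satisfies μ^k(Q̃)(x) = ∫ ∏_{j=1}^d ((x_j − u_j)^k / k!)·1[u_j ≤ x_j] dν₁(u) − ∫ ∏_{j=1}^d ((x_j − u_j)^k / k!)·1[u_j ≤ x_j] dν₂(u); that is, the k-fold primitive of a difference of cumulative distribution functions is the corresponding mixture of k-th order splines against the underlying measures. -/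
open MeasureTheory

/-- The primitive operator `μ(f)(x) = ∫_{B_x} f dλ`, where `B_x = ∏_j [0, x_j]`. -/
noncomputable def primOp (d : ℕ) (f : (Fin d → ℝ) → ℝ) : (Fin d → ℝ) → ℝ := fun x =>
  ∫ y in Set.Icc (0 : Fin d → ℝ) x, f y

/-!
For fixed `u`, Fubini over the coordinates shows that the primitive of `φ_u^k` is `φ_u^{k+1}`, as
long as the knot `u` lies above the corner of the box of integration. Since `φ_u^0` is the indicator
of `u ≤ x`, a distribution function is the mixture of the splines of order `0`, and swapping the
integrals over the box and over the knots raises the order of a mixture by one.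
-/

open Set

/-- The one-dimensional spline of order `k` with knot `b`, as a function of `t`: the kernel of
`k + 1`-fold integration. Multiplying by the indicator of `b ≤ t` makes order `0` a step function,
as `0 ^ 0 = 1`. -/
noncomputable def truncatedPower (k : ℕ) (b t : ℝ) : ℝ :=
  (t - b) ^ k / (k.factorial : ℝ) * (if b ≤ t then (1 : ℝ) else 0)

/-- The spline `φ_u^k(x)` of order `k` with knot `u`, a tensor product of truncated powers. -/
noncomputable def spline {ι : Type*} [Fintype ι] (k : ℕ) (u x : ι → ℝ) : ℝ :=
  ∏ j, truncatedPower k (u j) (x j)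

lemma integral_Icc_sub_pow_div_factorial (k : ℕ) {b t : ℝ} (hbt : b ≤ t) :
    ∫ s in Icc b t, (s - b) ^ k / (k.factorial : ℝ) =
      (t - b) ^ (k + 1) / ((k + 1).factorial : ℝ) := by
  rw [integral_Icc_eq_integral_Ioc, ← intervalIntegral.integral_of_le hbt,
    intervalIntegral.integral_div, intervalIntegral.integral_comp_sub_right (fun s ↦ s ^ k),
    integral_pow, sub_self, zero_pow k.succ_ne_zero, sub_zero, div_div, Nat.factorial_succ]
  push_cast
  rfl

lemma integral_Icc_truncatedPower (k : ℕ) {a b : ℝ} (hab : a ≤ b) (t : ℝ) :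
    ∫ s in Icc a t, truncatedPower k b s = truncatedPower (k + 1) b t := by
  have eq_indicator : truncatedPower k b =
      (Ici b).indicator fun s ↦ (s - b) ^ k / (k.factorial : ℝ) := by
    ext s
    simp [truncatedPower, indicator_apply]
  have Icc_inter_Ici : Icc a t ∩ Ici b = Icc b t := by
    rw [← Ici_inter_Iic, inter_right_comm, Ici_inter_Ici, sup_of_le_right hab, Ici_inter_Iic]
  rw [eq_indicator, setIntegral_indicator measurableSet_Ici, Icc_inter_Ici]
  rcases le_or_gt b t with hbt | htb
  · simp [integral_Icc_sub_pow_div_factorial k hbt, truncatedPower, hbt]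
  · simp [truncatedPower, htb]

section Spline

variable {ι : Type*} [Fintype ι]

lemma spline_eq_indicator (k : ℕ) (u x : ι → ℝ) :
    spline k u x = (Iic x).indicator (fun v ↦ ∏ j, (x j - v j) ^ k / (k.factorial : ℝ)) u := by
  classical
  simp [spline, truncatedPower, Finset.prod_ite_zero, indicator_apply, Pi.le_def]

lemma spline_of_not_le (k : ℕ) {u x : ι → ℝ} (hux : ¬u ≤ x) : spline k u x = 0 := by
  rw [spline_eq_indicator, indicator_of_notMem hux]

lemma integral_Icc_spline (k : ℕ) {a u : ι → ℝ} (hau : a ≤ u) (x : ι → ℝ) :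
    ∫ y in Icc a x, spline k u y = spline (k + 1) u x := by
  simp only [spline]
  rw [← pi_univ_Icc, volume_pi, Measure.restrict_pi_pi,
    integral_fintype_prod_eq_prod (fun j ↦ truncatedPower k (u j))]
  exact Finset.prod_congr rfl fun j _ ↦ integral_Icc_truncatedPower k (hau j) (x j)

lemma integral_spline_zero (ν : Measure (ι → ℝ)) (x : ι → ℝ) :
    ∫ u, spline 0 u x ∂ν = ν.real (Iic x) := by
  rw [← integral_indicator_one measurableSet_Iic]
  simp [spline_eq_indicator, Pi.one_def]

lemma locallyIntegrable_spline (k : ℕ) (ρ : Measure ((ι → ℝ) × (ι → ℝ)))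
    [IsLocallyFiniteMeasure ρ] :
    LocallyIntegrable (fun p : (ι → ℝ) × (ι → ℝ) ↦ spline k p.2 p.1) ρ := by
  have continuous_prod : Continuous fun p : (ι → ℝ) × (ι → ℝ) ↦
      ∏ j, (p.1 j - p.2 j) ^ k / (k.factorial : ℝ) := by
    fun_prop
  have isClosed_le : IsClosed {p : (ι → ℝ) × (ι → ℝ) | p.2 ≤ p.1} :=
    isClosed_le continuous_snd continuous_fst
  have eq_indicator : (fun p : (ι → ℝ) × (ι → ℝ) ↦ spline k p.2 p.1) =
      {p | p.2 ≤ p.1}.indicator fun p ↦ ∏ j, (p.1 j - p.2 j) ^ k / (k.factorial : ℝ) :=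
    funext fun p ↦ spline_eq_indicator k p.2 p.1
  rw [eq_indicator]
  exact continuous_prod.locallyIntegrable.indicator isClosed_le.measurableSet

variable {ν : Measure (ι → ℝ)} [IsLocallyFiniteMeasure ν] {a : ι → ℝ}

lemma integrable_spline_prod (k : ℕ) (hν : ∀ᵐ u ∂ν, a ≤ u) (x : ι → ℝ) :
    Integrable (fun p : (ι → ℝ) × (ι → ℝ) ↦ spline k p.2 p.1)
      ((volume.restrict (Icc a x)).prod ν) := by
  have restrict_eq : ν.restrict (Ici a) = ν := Measure.restrict_eq_self_of_ae_mem hν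
  rw [← restrict_eq, Measure.prod_restrict]
  -- Knots in `Ici a` outside the compact box `Icc a x` do not contribute.
  refine ((locallyIntegrable_spline k _).integrableOn_isCompact
    (isCompact_Icc.prod isCompact_Icc)).of_forall_sdiff_eq_zero (s := Icc a x ×ˢ Icc a x)
    (measurableSet_Icc.prod measurableSet_Ici) ?_
  rintro ⟨y, u⟩ ⟨⟨hy, hu⟩, hyu⟩
  exact spline_of_not_le k fun huy ↦ hyu ⟨hy, hu, huy.trans hy.2⟩

lemma integral_Icc_integral_spline (k : ℕ) (hν : ∀ᵐ u ∂ν, a ≤ u) (x : ι → ℝ) :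
    ∫ y in Icc a x, ∫ u, spline k u y ∂ν = ∫ u, spline (k + 1) u x ∂ν := by
  rw [integral_integral_swap (integrable_spline_prod k hν x)]
  refine integral_congr_ae ?_
  filter_upwards [hν] with u hau using integral_Icc_spline k hau x

end Spline

theorem stmt_1_general (d k : ℕ) (ν₁ ν₂ : Measure (Fin d → ℝ))
    [IsLocallyFiniteMeasure ν₁] [IsLocallyFiniteMeasure ν₂]
    (hν₁ : ∀ᵐ u ∂ν₁, 0 ≤ u) (hν₂ : ∀ᵐ u ∂ν₂, 0 ≤ u)
    (Q : (Fin d → ℝ) → ℝ) (x : Fin d → ℝ) (hx : 0 ≤ x)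
    (hQ : ∀ z ∈ Icc 0 x, Q z = ν₁.real (Iic z) - ν₂.real (Iic z)) :
    (primOp d)^[k] Q x = (∫ u, spline k u x ∂ν₁) - ∫ u, spline k u x ∂ν₂ := by
  induction k generalizing x with
  | zero =>
    rw [Function.iterate_zero_apply, hQ x ⟨hx, le_rfl⟩, integral_spline_zero, integral_spline_zero]
  | succ k ih =>
    have iterate_eq : ∀ y ∈ Icc 0 x, (primOp d)^[k] Q y =
        (∫ u, spline k u y ∂ν₁) - ∫ u, spline k u y ∂ν₂ :=
      fun y hy ↦ ih y hy.1 fun z hz ↦ hQ z ⟨hz.1, hz.2.trans hy.2⟩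
    rw [Function.iterate_succ_apply', primOp, setIntegral_congr_fun measurableSet_Icc iterate_eq,
      integral_sub (integrable_spline_prod k hν₁ x).integral_prod_left
        (integrable_spline_prod k hν₂ x).integral_prod_left,
      integral_Icc_integral_spline k hν₁, integral_Icc_integral_spline k hν₂]

theorem stmt_1 (d k : ℕ) (hk : 1 ≤ k)
    (ν₁ ν₂ : Measure (Fin d → ℝ)) [IsFiniteMeasure ν₁] [IsFiniteMeasure ν₂]
    (hν₁ : ν₁ ((Set.Icc (0 : Fin d → ℝ) 1)ᶜ) = 0)
    (hν₂ : ν₂ ((Set.Icc (0 : Fin d → ℝ) 1)ᶜ) = 0)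
    (Q : (Fin d → ℝ) → ℝ)
    (hQ : ∀ z ∈ Set.Icc (0 : Fin d → ℝ) 1,
      Q z = (ν₁ (Set.Icc (0 : Fin d → ℝ) 1 ∩ Set.Iic z)).toReal
          - (ν₂ (Set.Icc (0 : Fin d → ℝ) 1 ∩ Set.Iic z)).toReal)
    (x : Fin d → ℝ) (hx : x ∈ Set.Icc (0 : Fin d → ℝ) 1) :
    (primOp d)^[k] Q x
      = (∫ u, ∏ j, ((x j - u j) ^ k / (Nat.factorial k : ℝ)) *
            (if u j ≤ x j then (1 : ℝ) else 0) ∂ν₁)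
        - ∫ u, ∏ j, ((x j - u j) ^ k / (Nat.factorial k : ℝ)) *
            (if u j ≤ x j then (1 : ℝ) else 0) ∂ν₂ := by
  refine stmt_1_general d k ν₁ ν₂ (Filter.Eventually.mono hν₁ fun _ hu ↦ hu.1)
    (Filter.Eventually.mono hν₂ fun _ hu ↦ hu.1) Q x hx.1 fun z hz ↦ ?_
  rw [hQ z ⟨hz.1, hz.2.trans hx.2⟩, inter_comm, measure_inter_conull hν₁, measure_inter_conull hν₂,
    Measure.real, Measure.real]
end

section
/- (One-dimensional k-th order spline representation.) Let k ≥ 0 be an integer, let c_0, …, c_k ∈ ℝ, and let ν₁, ν₂ be finite Borel measures on ℝ. Define g_k(x) = c_k + ν₁((0, x]) − ν₂((0, x]) for x ∈ [0,1], and recursively g_m(x) = c_m + ∫_0^x g_{m+1}(t) dt for m = k−1, …, 0. Then for every x ∈ [0,1]: g_0(x) = Σ_{m=0}^{k} c_m x^m / m! + ∫_{(0,x]} ((x − u)^k / k!) dν₁(u) − ∫_{(0,x]} ((x − u)^k / k!) dν₂(u). In words: a function whose k-th sequential derivative is a difference of cumulative distribution functions is an (infinite) linear combination of the polynomial splines x^m/m!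 with knot 0 and the k-th order splines (x−u)^k/k!·1[u ≤ x], with coefficient measure given by the Lebesgue–Stieltjes measure of the k-th derivative. -/
open MeasureTheory

/-!
Integrating over `[a, x]` sends the monomial `(t - a) ^ m / m!` to the next one and, by Fubini's
theorem on the triangle `a < u ≤ t ≤ x`, sends the spline integral
`∫ u in (a, t], (t - u) ^ n / n! dν(u)` to the one of order `n + 1`. Starting from
`ν((a, x])`, the spline integral of order `0`, and integrating `k` times gives the representation.
-/

open Set Function

section TriangleFubini

variable {α E : Type*} [LinearOrder α] [TopologicalSpace α] [OrderClosedTopology α]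
  [MeasurableSpace α] [OpensMeasurableSpace α] [NormedAddCommGroup E] {μ ν : Measure α} {a b : α}

lemma setIntegral_Ioc_indicator_Iic [NormedSpace ℝ E] (f : α → E) {t : α} (ht : t ≤ b) :
    ∫ u in Ioc a b, (Iic t).indicator f u ∂ν = ∫ u in Ioc a t, f u ∂ν := by
  rw [setIntegral_indicator measurableSet_Iic, Ioc_inter_Iic, min_eq_right ht]

variable [SecondCountableTopology α] [SFinite μ] [SFinite ν] {f : α → α → E}

lemma integrable_indicator_triangle
    (hf : IntegrableOn (uncurry f) (Ioc a b ×ˢ Ioc a b) (μ.prod ν)) :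
    Integrable (uncurry fun t u => (Iic t).indicator (f t) u)
      ((μ.restrict (Ioc a b)).prod (ν.restrict (Ioc a b))) := by
  have h_triangle : MeasurableSet {p : α × α | p.2 ≤ p.1} :=
    measurableSet_le measurable_snd measurable_fst
  rw [Measure.prod_restrict]
  refine (Integrable.indicator hf h_triangle).congr (.of_forall fun p => ?_)
  simp [indicator_apply, uncurry]

variable [NormedSpace ℝ E]

lemma integrableOn_setIntegral_Ioc
    (hf : IntegrableOn (uncurry f) (Ioc a b ×ˢ Ioc a b) (μ.prod ν)) :
    IntegrableOn (fun t => ∫ u in Ioc a t, f t u ∂ν) (Ioc a b) μ :=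
  IntegrableOn.congr_fun (integrable_indicator_triangle hf).integral_prod_left
    (fun t ht => setIntegral_Ioc_indicator_Iic (f t) ht.2) measurableSet_Ioc

lemma setIntegral_Ioc_setIntegral_Ioc_swap
    (hf : IntegrableOn (uncurry f) (Ioc a b ×ˢ Ioc a b) (μ.prod ν)) :
    ∫ t in Ioc a b, ∫ u in Ioc a t, f t u ∂ν ∂μ
      = ∫ u in Ioc a b, ∫ t in Icc u b, f t u ∂μ ∂ν := by
  rw [← setIntegral_congr_fun measurableSet_Ioc
      fun t ht => setIntegral_Ioc_indicator_Iic (ν := ν) (f t) ht.2,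
    integral_integral_swap (integrable_indicator_triangle hf)]
  refine setIntegral_congr_fun measurableSet_Ioc fun u hu => ?_
  have h_section : Ioc a b ∩ Ici u = Icc u b := by
    ext t
    exact ⟨fun ht => ⟨ht.2, ht.1.2⟩, fun ht => ⟨⟨hu.1.trans_le ht.1, ht.2⟩, ht.1⟩⟩
  calc ∫ t in Ioc a b, (Iic t).indicator (f t) u ∂μ
      = ∫ t in Ioc a b, (Ici u).indicator (f · u) t ∂μ := by
        simp only [indicator_apply, mem_Iic, mem_Ici]
    _ = ∫ t in Icc u b, f t u ∂μ := by
        rw [setIntegral_indicator measurableSet_Ici, h_section]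

end TriangleFubini

lemma integral_sub_pow_div_factorial (a x : ℝ) (n : ℕ) :
    ∫ t in a..x, (t - a) ^ n / (n.factorial : ℝ)
      = (x - a) ^ (n + 1) / ((n + 1).factorial : ℝ) := by
  rw [intervalIntegral.integral_div, intervalIntegral.integral_comp_sub_right (· ^ n), integral_pow,
    sub_self, zero_pow n.succ_ne_zero, sub_zero, div_div, Nat.factorial_succ]
  push_cast
  rfl

/-- The integral against `ν` of the `n`-th order splines `x ↦ (x - u) ^ n / n! · 1[u ≤ x]` over all
knots `u > a`, as a function of `x`. -/
noncomputable def splineIntegral (ν : Measure ℝ) (a : ℝ) (n : ℕ) (x : ℝ) : ℝ :=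
  ∫ u in Ioc a x, (x - u) ^ n / (n.factorial : ℝ) ∂ν

section SplineIntegral

lemma splineIntegral_zero (ν : Measure ℝ) (a x : ℝ) :
    splineIntegral ν a 0 x = ν.real (Ioc a x) := by
  simp [splineIntegral]

variable (ν : Measure ℝ) [IsLocallyFiniteMeasure ν] (a : ℝ) (n : ℕ)

lemma integrableOn_splineKernel (b : ℝ) :
    IntegrableOn (uncurry fun t u : ℝ => (t - u) ^ n / (n.factorial : ℝ))
      (Ioc a b ×ˢ Ioc a b) (volume.prod ν) := by
  have h_cont : Continuous (uncurry fun t u : ℝ => (t - u) ^ n / (n.factorial : ℝ)) := by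
    fun_prop
  exact (h_cont.continuousOn.integrableOn_compact (isCompact_Icc.prod isCompact_Icc)).mono_set
    (prod_mono Ioc_subset_Icc_self Ioc_subset_Icc_self)

variable {a} {b : ℝ}

lemma intervalIntegrable_splineIntegral (hab : a ≤ b) :
    IntervalIntegrable (splineIntegral ν a n) volume a b :=
  (intervalIntegrable_iff_integrableOn_Ioc_of_le hab).2
    (integrableOn_setIntegral_Ioc (integrableOn_splineKernel ν a n b))

lemma integral_splineIntegral (hab : a ≤ b) :
    ∫ t in a..b, splineIntegral ν a n t = splineIntegral ν a (n + 1) b := by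
  unfold splineIntegral
  rw [intervalIntegral.integral_of_le hab,
    setIntegral_Ioc_setIntegral_Ioc_swap (integrableOn_splineKernel ν a n b)]
  refine setIntegral_congr_fun measurableSet_Ioc fun u hu => ?_
  simp only [integral_Icc_eq_integral_Ioc, ← intervalIntegral.integral_of_le hu.2,
    integral_sub_pow_div_factorial]

end SplineIntegral

section TaylorSum

variable {E : Type*} [NormedAddCommGroup E] [NormedSpace ℝ E] [CompleteSpace E]

lemma integral_taylor_sum (c : ℕ → E) (n : ℕ) (a x : ℝ) :
    ∫ t in a..x, ∑ m ∈ Finset.range n, ((t - a) ^ m / (m.factorial : ℝ)) • c m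
      = ∑ m ∈ Finset.range n, ((x - a) ^ (m + 1) / ((m + 1).factorial : ℝ)) • c m := by
  rw [intervalIntegral.integral_finsetSum
    fun m _ => Continuous.intervalIntegrable (by fun_prop) _ _]
  simp only [intervalIntegral.integral_smul_const, integral_sub_pow_div_factorial]

theorem eq_taylor_sum_add_of_eq_add_integral (k : ℕ) (c : ℕ → E) (g h : ℕ → ℝ → E) {a b : ℝ}
    (h_int : ∀ n, IntervalIntegrable (h n) volume a b)
    (h_succ : ∀ n, ∀ x ∈ Icc a b, ∫ t in a..x, h n t = h (n + 1) x)
    (hgk : ∀ x ∈ Icc a b, g k x = c k + h 0 x)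
    (hrec : ∀ m < k, ∀ x ∈ Icc a b, g m x = c m + ∫ t in a..x, g (m + 1) t)
    {x : ℝ} (hx : x ∈ Icc a b) :
    g 0 x = (∑ m ∈ Finset.range (k + 1), ((x - a) ^ m / (m.factorial : ℝ)) • c m) + h k x := by
  induction k generalizing c g x with
  | zero => simp [hgk x hx]
  | succ k ih =>
    have h_shift : ∀ t ∈ Icc a b, g 1 t =
        (∑ m ∈ Finset.range (k + 1), ((t - a) ^ m / (m.factorial : ℝ)) • c (m + 1)) + h k t :=
      fun t => ih (c <| · + 1) (g <| · + 1) hgk fun m hm => hrec (m + 1) (by lia)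
    have h_integral : ∫ t in a..x, g 1 t =
        (∑ m ∈ Finset.range (k + 1),
          ((x - a) ^ (m + 1) / ((m + 1).factorial : ℝ)) • c (m + 1)) + h (k + 1) x := by
      rw [intervalIntegral.integral_congr fun t ht => h_shift t
          (Icc_subset_Icc_right hx.2 (uIcc_of_le hx.1 ▸ ht)),
        intervalIntegral.integral_add (Continuous.intervalIntegrable (by fun_prop) _ _)
          ((h_int k).mono_set (uIcc_subset_uIcc_left (Icc_subset_uIcc hx))),
        integral_taylor_sum (c <| · + 1), h_succ k x hx]
    rw [hrec 0 k.succ_pos x hx, h_integral, Finset.sum_range_succ' _ (k + 1), ← add_assoc,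
      add_comm (c 0)]
    simp

end TaylorSum

theorem stmt_3_general (k : ℕ) (c : ℕ → ℝ)
    (ν₁ ν₂ : Measure ℝ) [IsLocallyFiniteMeasure ν₁] [IsLocallyFiniteMeasure ν₂]
    (g : ℕ → ℝ → ℝ) {a b : ℝ}
    (hgk : ∀ x ∈ Icc a b, g k x = c k + (ν₁.real (Ioc a x) - ν₂.real (Ioc a x)))
    (hrec : ∀ m < k, ∀ x ∈ Icc a b, g m x = c m + ∫ t in a..x, g (m + 1) t)
    {x : ℝ} (hx : x ∈ Icc a b) :
    g 0 x = (∑ m ∈ Finset.range (k + 1), c m * (x - a) ^ m / (m.factorial : ℝ))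
      + (splineIntegral ν₁ a k x - splineIntegral ν₂ a k x) := by
  have h_int (ν : Measure ℝ) [IsLocallyFiniteMeasure ν] (n : ℕ) {y : ℝ} (hy : y ∈ Icc a b) :
      IntervalIntegrable (splineIntegral ν a n) volume a y :=
    intervalIntegrable_splineIntegral ν n hy.1
  have hab : b ∈ Icc a b := right_mem_Icc.2 (hx.1.trans hx.2)
  have h_taylor := eq_taylor_sum_add_of_eq_add_integral k c g
    (fun n y => splineIntegral ν₁ a n y - splineIntegral ν₂ a n y)
    (fun n => (h_int ν₁ n hab).sub (h_int ν₂ n hab))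
    (fun n y hy => by
      rw [intervalIntegral.integral_sub (h_int ν₁ n hy) (h_int ν₂ n hy),
        integral_splineIntegral ν₁ n hy.1, integral_splineIntegral ν₂ n hy.1])
    (by simpa only [splineIntegral_zero] using hgk) hrec hx
  simpa only [smul_eq_mul, div_mul_eq_mul_div, mul_comm (c _)] using h_taylor

/-- One-dimensional `k`-th order spline representation. -/
theorem stmt_3 (k : ℕ) (c : ℕ → ℝ)
    (ν₁ ν₂ : Measure ℝ) [IsFiniteMeasure ν₁] [IsFiniteMeasure ν₂]
    (g : ℕ → ℝ → ℝ)
    (hgk : ∀ x ∈ Set.Icc (0 : ℝ) 1,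
      g k x = c k + ((ν₁ (Set.Ioc 0 x)).toReal - (ν₂ (Set.Ioc 0 x)).toReal))
    (hrec : ∀ m < k, ∀ x ∈ Set.Icc (0 : ℝ) 1,
      g m x = c m + ∫ t in Set.Icc (0 : ℝ) x, g (m + 1) t)
    (x : ℝ) (hx : x ∈ Set.Icc (0 : ℝ) 1) :
    g 0 x = (∑ m ∈ Finset.range (k + 1), c m * x ^ m / (Nat.factorial m : ℝ))
      + ((∫ u in Set.Ioc (0 : ℝ) x, (x - u) ^ k / (Nat.factorial k : ℝ) ∂ν₁)
        - ∫ u in Set.Ioc (0 : ℝ) x, (x - u) ^ k / (Nat.factorial k : ℝ) ∂ν₂) := by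
  simpa only [splineIntegral, sub_zero] using stmt_3_general k c ν₁ ν₂ g hgk (fun m hm y hy => by
    rw [hrec m hm y hy, integral_Icc_eq_integral_Ioc, intervalIntegral.integral_of_le hy.1]) hx
end

section
/- (Score covariance identity for the hazard log-likelihood.) Let λ_h : [0, ∞) → [0, ∞) be measurable with Λ(t) = ∫_0^t λ_h(s) ds < ∞ for every t ≥ 0 and Λ(t) → ∞ as t → ∞, so that t ↦ λ_h(t) e^{−Λ(t)} is a probability density on [0, ∞) with respect to Lebesgue measure. Let T be a nonnegative random variable with this density. Then for all bounded measurable φ, h : [0, ∞) → ℝ, E[(φ(T) − ∫_0^T λ_h φ)(h(T) − ∫_0^T λ_h h)] = E[∫_0^T λ_h(s) φ(s) h(s) ds]. -/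
open MeasureTheory Filter

/-!
Let `μ` be the law of `T`, let `ρ(ds) = lam(s) ds` be its hazard measure, and write
`F(t) = ∫_{(-∞, t]} f dρ`. Since `μ [s, ∞) = e^{-Λ(s)}`, we have `μ(ds) = μ [s, ∞) ρ(ds)`, and
Fubini's theorem gives `∫ F dμ = ∫ f dμ` for every integrable `f`. As `ρ` has no atoms, `F G` is the
primitive of `f G + g F`, so in `(f - F) (g - G) = f g - (f G + g F) + F G` the last two terms
cancel in mean, while `f g` has the same mean as its primitive.

The products are integrable by the Hardy inequality `∫ F² dμ ≤ 4 ∫ f² dμ`: the two facts above give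
`∫ F² dμ = 2 ∫ f F dμ`, and `4 f F ≤ 4 f² + F²` lets `∫ F² dμ` be absorbed once it is known to be
finite, which it is for bounded `f ≥ 0`; monotone convergence does the rest.
-/

open Set (Iic Ici Iio Ioi Ioc uIcc)
open scoped ENNReal NNReal

theorem ennreal_two_mul_le_add_sq (a b : ℝ≥0∞) : 2 * a * b ≤ a ^ 2 + b ^ 2 := by
  induction a with
  | top => simp
  | coe a =>
    induction b with
    | top => simp
    | coe b => exact_mod_cast two_mul_le_add_sq a b

theorem memLp_two_iff_lintegral_sq_enorm_lt_top {α : Type*} [MeasurableSpace α] {μ : Measure α}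
    {f : α → ℝ} (hf : AEStronglyMeasurable f μ) :
    MemLp f 2 μ ↔ ∫⁻ t, ‖f t‖ₑ ^ 2 ∂μ < ∞ := by
  rw [MemLp, and_iff_right hf, eLpNorm_lt_top_iff_lintegral_rpow_enorm_lt_top two_ne_zero
    ENNReal.ofNat_ne_top]
  simp

section Hazard

variable {α : Type*} [LinearOrder α]

theorem indicator_Iic_apply_eq_indicator_Ici {β : Type*} [Zero β] (f : α → β) (t s : α) :
    (Iic t).indicator f s = (Ici s).indicator (fun _ => f s) t := by
  simp only [Set.indicator_apply, Set.mem_Iic, Set.mem_Ici]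

variable [MeasurableSpace α]

/-- `ρ` is the hazard measure of the law `μ` of a random time: `μ(ds) = μ [s, ∞) ρ(ds)`, i.e.
`ρ(ds)` is the conditional probability of an event in `ds` given that none occurred before `s`. -/
def IsHazardMeasure (ρ μ : Measure α) : Prop :=
  μ = ρ.withDensity fun s => μ (Ici s)

/-- The primitive `t ↦ ∫_{(-∞, t]} f dρ`. When `ρ` is the hazard measure of the law of `T`, its
value at `T` is the total compensator of the process that jumps by `f T` at time `T`. It takes the
junk value `0` where `f` is not `ρ`-integrable on `(-∞, t]`. -/
noncomputable def compensator (ρ : Measure α) (f : α → ℝ) (t : α) : ℝ :=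
  ∫ s in Iic t, f s ∂ρ

variable [TopologicalSpace α] [OrderClosedTopology α] [SecondCountableTopology α]
  [OpensMeasurableSpace α] {μ ρ : Measure α}

theorem measurable_indicator_Iic {β : Type*} [MeasurableSpace β] [Zero β] {f : α → β}
    (hf : Measurable f) : Measurable fun p : α × α => (Iic p.1).indicator f p.2 :=
  (hf.comp measurable_snd).indicator (measurableSet_le measurable_snd measurable_fst)

theorem measurable_setLIntegral_Iic [SFinite ρ] {f : α → ℝ≥0∞} (hf : Measurable f) :
    Measurable fun t => ∫⁻ s in Iic t, f s ∂ρ := by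
  simp only [← lintegral_indicator measurableSet_Iic]
  exact (measurable_indicator_Iic hf).lintegral_prod_right'

theorem lintegral_setLIntegral_Iic_eq_lintegral_measure_Ici_mul [SFinite μ] [SFinite ρ]
    {f : α → ℝ≥0∞} (hf : Measurable f) :
    ∫⁻ t, ∫⁻ s in Iic t, f s ∂ρ ∂μ = ∫⁻ s, μ (Ici s) * f s ∂ρ := by
  simp only [← lintegral_indicator measurableSet_Iic]
  rw [lintegral_lintegral_swap (measurable_indicator_Iic hf).aemeasurable]
  simp only [indicator_Iic_apply_eq_indicator_Ici, lintegral_indicator_const measurableSet_Ici,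
    mul_comm]

theorem measurable_measure_Ici [SFinite μ] : Measurable fun s => μ (Ici s) :=
  measurable_measure_prodMk_left (measurableSet_le measurable_fst measurable_snd)

theorem IsHazardMeasure.lintegral_setLIntegral_Iic [SFinite μ] [SFinite ρ]
    (h : IsHazardMeasure ρ μ) {f : α → ℝ≥0∞} (hf : Measurable f) :
    ∫⁻ t, ∫⁻ s in Iic t, f s ∂ρ ∂μ = ∫⁻ t, f t ∂μ := by
  conv_rhs => rw [h]
  rw [lintegral_setLIntegral_Iic_eq_lintegral_measure_Ici_mul hf,
    lintegral_withDensity_eq_lintegral_mul _ measurable_measure_Ici hf]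
  rfl

theorem sq_lintegral_le_two_mul [SFinite ρ] {f : α → ℝ≥0∞} (hf : Measurable f) :
    (∫⁻ s, f s ∂ρ) ^ 2 ≤ 2 * ∫⁻ s, f s * ∫⁻ u in Iic s, f u ∂ρ ∂ρ := by
  have hm : Measurable fun p : α × α => f p.1 * (Iic p.1).indicator f p.2 :=
    (hf.comp measurable_fst).mul (measurable_indicator_Iic hf)
  have hlower : ∫⁻ s, f s * ∫⁻ u in Iic s, f u ∂ρ ∂ρ
      = ∫⁻ s, ∫⁻ u, f s * (Iic s).indicator f u ∂ρ ∂ρ := by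
    refine lintegral_congr fun s => ?_
    rw [← lintegral_indicator measurableSet_Iic,
      lintegral_const_mul _ (hf.indicator measurableSet_Iic)]
  have hsplit (s u : α) :
      f s * f u ≤ f s * (Iic s).indicator f u + f u * (Iic u).indicator f s := by
    rcases le_total u s with hus | hsu
    · simp [Set.indicator_of_mem (Set.mem_Iic.2 hus)]
    · simp [Set.indicator_of_mem (Set.mem_Iic.2 hsu), mul_comm]
  calc (∫⁻ s, f s ∂ρ) ^ 2 = ∫⁻ s, ∫⁻ u, f s * f u ∂ρ ∂ρ := by
        rw [sq, lintegral_lintegral_mul hf.aemeasurable hf.aemeasurable]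
    _ ≤ ∫⁻ s, ∫⁻ u, (f s * (Iic s).indicator f u + f u * (Iic u).indicator f s) ∂ρ ∂ρ := by
        gcongr with s u
        exact hsplit s u
    _ = 2 * ∫⁻ s, f s * ∫⁻ u in Iic s, f u ∂ρ ∂ρ := by
        rw [hlower, two_mul]
        nth_rw 3 [lintegral_lintegral_swap hm.aemeasurable]
        rw [← lintegral_add_left hm.lintegral_prod_right']
        exact lintegral_congr fun s => lintegral_add_left (hm.comp measurable_prodMk_left) _

theorem sq_setLIntegral_Iic_le_two_mul [SFinite ρ] {f : α → ℝ≥0∞} (hf : Measurable f) (t : α) :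
    (∫⁻ s in Iic t, f s ∂ρ) ^ 2 ≤ 2 * ∫⁻ s in Iic t, f s * ∫⁻ u in Iic s, f u ∂ρ ∂ρ := by
  refine (sq_lintegral_le_two_mul hf).trans ?_
  gcongr
  exact Measure.restrict_le_self

theorem IsHazardMeasure.lintegral_sq_setLIntegral_Iic_le_two_mul [SFinite μ] [SFinite ρ]
    (h : IsHazardMeasure ρ μ) {f : α → ℝ≥0∞} (hf : Measurable f) :
    ∫⁻ t, (∫⁻ s in Iic t, f s ∂ρ) ^ 2 ∂μ ≤ 2 * ∫⁻ t, f t * ∫⁻ s in Iic t, f s ∂ρ ∂μ := by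
  have hproduct : Measurable fun s => f s * ∫⁻ u in Iic s, f u ∂ρ :=
    hf.mul (measurable_setLIntegral_Iic hf)
  calc ∫⁻ t, (∫⁻ s in Iic t, f s ∂ρ) ^ 2 ∂μ
      ≤ ∫⁻ t, 2 * ∫⁻ s in Iic t, f s * ∫⁻ u in Iic s, f u ∂ρ ∂ρ ∂μ :=
        lintegral_mono (sq_setLIntegral_Iic_le_two_mul hf)
    _ = 2 * ∫⁻ t, f t * ∫⁻ s in Iic t, f s ∂ρ ∂μ := by
        rw [lintegral_const_mul _ (measurable_setLIntegral_Iic hproduct),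
          h.lintegral_setLIntegral_Iic hproduct]

theorem IsHazardMeasure.lintegral_sq_setLIntegral_Iic_le_of_le_const [IsFiniteMeasure μ]
    [SFinite ρ] (h : IsHazardMeasure ρ μ) {f : α → ℝ≥0∞} (hf : Measurable f) {c : ℝ≥0}
    (hc : ∀ s, f s ≤ c) :
    ∫⁻ t, (∫⁻ s in Iic t, f s ∂ρ) ^ 2 ∂μ ≤ 4 * ∫⁻ t, f t ^ 2 ∂μ := by
  set F : α → ℝ≥0∞ := fun t => ∫⁻ s in Iic t, f s ∂ρ with hF
  have hFm : Measurable F := measurable_setLIntegral_Iic hf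
  have hfF : Measurable fun t => f t * F t := hf.mul hFm
  have henergy : ∫⁻ t, F t ^ 2 ∂μ ≤ 2 * ∫⁻ t, f t * F t ∂μ :=
    h.lintegral_sq_setLIntegral_Iic_le_two_mul hf
  have hfinite : ∫⁻ t, F t ^ 2 ∂μ ≠ ∞ := by
    refine ne_top_of_le_ne_top ?_ henergy
    have : ∫⁻ t, f t * F t ∂μ ≤ c * (c * μ Set.univ) :=
      calc ∫⁻ t, f t * F t ∂μ ≤ ∫⁻ t, c * F t ∂μ := by gcongr with t; exact hc t
        _ = c * ∫⁻ t, f t ∂μ := by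
            rw [lintegral_const_mul _ hFm, hF, h.lintegral_setLIntegral_Iic hf]
        _ ≤ c * (c * μ Set.univ) := by
            rw [← lintegral_const]; gcongr with t; exact hc t
    exact ENNReal.mul_ne_top (by finiteness) (ne_top_of_le_ne_top (by finiteness) this)
  refine (ENNReal.add_le_add_iff_right hfinite).1 ?_
  calc ∫⁻ t, F t ^ 2 ∂μ + ∫⁻ t, F t ^ 2 ∂μ ≤ 2 * (2 * ∫⁻ t, f t * F t ∂μ) := by
        rw [← two_mul]; gcongr
    _ = ∫⁻ t, 4 * (f t * F t) ∂μ := by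
        rw [lintegral_const_mul _ hfF, ← mul_assoc]; norm_num
    _ ≤ ∫⁻ t, (4 * f t ^ 2 + F t ^ 2) ∂μ := by
        gcongr with t
        calc 4 * (f t * F t) = 2 * (2 * f t) * F t := by ring
          _ ≤ (2 * f t) ^ 2 + F t ^ 2 := ennreal_two_mul_le_add_sq _ _
          _ = 4 * f t ^ 2 + F t ^ 2 := by ring
    _ = 4 * ∫⁻ t, f t ^ 2 ∂μ + ∫⁻ t, F t ^ 2 ∂μ := by
        rw [lintegral_add_right _ (hFm.pow_const 2), lintegral_const_mul _ (hf.pow_const 2)]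

theorem IsHazardMeasure.lintegral_sq_setLIntegral_Iic_le [IsFiniteMeasure μ] [SFinite ρ]
    (h : IsHazardMeasure ρ μ) {f : α → ℝ≥0∞} (hf : Measurable f) :
    ∫⁻ t, (∫⁻ s in Iic t, f s ∂ρ) ^ 2 ∂μ ≤ 4 * ∫⁻ t, f t ^ 2 ∂μ := by
  let trunc (n : ℕ) (s : α) : ℝ≥0∞ := min (f s) n
  have htrunc_meas (n : ℕ) : Measurable (trunc n) := hf.min measurable_const
  have htrunc_mono : Monotone trunc := fun m n hmn s =>
    min_le_min_left _ (Nat.cast_le.2 hmn)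
  have hiSup_trunc (s : α) : ⨆ n, trunc n s = f s := by
    simp only [trunc, ← inf_iSup_eq, ENNReal.iSup_natCast, inf_top_eq]
  have hiSup_sq (t : α) :
      (∫⁻ s in Iic t, f s ∂ρ) ^ 2 = ⨆ n, (∫⁻ s in Iic t, trunc n s ∂ρ) ^ 2 := by
    simp only [← hiSup_trunc, lintegral_iSup htrunc_meas htrunc_mono, ENNReal.iSup_pow]
  simp only [hiSup_sq]
  have hsq_mono : Monotone fun n t => (∫⁻ s in Iic t, trunc n s ∂ρ) ^ 2 := fun m n hmn t =>
    pow_le_pow_left₀ zero_le (lintegral_mono (htrunc_mono hmn)) 2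
  rw [lintegral_iSup (fun n => (measurable_setLIntegral_Iic (htrunc_meas n)).pow_const 2) hsq_mono]
  refine iSup_le fun n => ?_
  calc ∫⁻ t, (∫⁻ s in Iic t, trunc n s ∂ρ) ^ 2 ∂μ ≤ 4 * ∫⁻ t, trunc n t ^ 2 ∂μ :=
        h.lintegral_sq_setLIntegral_Iic_le_of_le_const (htrunc_meas n) (c := n)
          fun s => by simp [trunc]
    _ ≤ 4 * ∫⁻ t, f t ^ 2 ∂μ := by
        gcongr with t
        exact min_le_left _ _

theorem measurable_compensator [SFinite ρ] {f : α → ℝ} (hf : Measurable f) :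
    Measurable (compensator ρ f) := by
  unfold compensator
  simp only [← integral_indicator measurableSet_Iic]
  exact (measurable_indicator_Iic hf).stronglyMeasurable.integral_prod_right'.measurable

theorem IsHazardMeasure.integrable_prod_indicator_Iic [SFinite μ] [SFinite ρ]
    (h : IsHazardMeasure ρ μ) {f : α → ℝ} (hfm : Measurable f) (hf : Integrable f μ) :
    Integrable (fun p : α × α => (Iic p.1).indicator f p.2) (μ.prod ρ) := by
  have hm := measurable_indicator_Iic hfm
  refine ⟨hm.aestronglyMeasurable, ?_⟩
  rw [hasFiniteIntegral_iff_enorm, lintegral_prod _ hm.enorm.aemeasurable]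
  simp only [enorm_indicator_eq_indicator_enorm, lintegral_indicator measurableSet_Iic]
  rw [h.lintegral_setLIntegral_Iic hfm.enorm]
  exact hf.hasFiniteIntegral

theorem IsHazardMeasure.ae_integrableOn_Iic [SFinite μ] [SFinite ρ]
    (h : IsHazardMeasure ρ μ) {f : α → ℝ} (hfm : Measurable f) (hf : Integrable f μ) :
    ∀ᵐ t ∂μ, IntegrableOn f (Iic t) ρ := by
  filter_upwards [(h.integrable_prod_indicator_Iic hfm hf).prod_right_ae] with t ht
  exact (integrable_indicator_iff measurableSet_Iic).1 ht

theorem IsHazardMeasure.integral_compensator [IsFiniteMeasure μ] [SFinite ρ]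
    (h : IsHazardMeasure ρ μ) {f : α → ℝ} (hfm : Measurable f) (hf : Integrable f μ) :
    ∫ t, compensator ρ f t ∂μ = ∫ t, f t ∂μ := by
  calc ∫ t, compensator ρ f t ∂μ = ∫ t, ∫ s, (Iic t).indicator f s ∂ρ ∂μ := by
        simp only [compensator, integral_indicator measurableSet_Iic]
    _ = ∫ s, ∫ t, (Iic t).indicator f s ∂μ ∂ρ :=
        integral_integral_swap (h.integrable_prod_indicator_Iic hfm hf)
    _ = ∫ s, (μ (Ici s)).toReal • f s ∂ρ := by
        simp only [indicator_Iic_apply_eq_indicator_Ici, Measure.real,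
          integral_indicator_const _ measurableSet_Ici]
    _ = ∫ t, f t ∂μ := by
        conv_rhs => rw [h]
        rw [integral_withDensity_eq_integral_toReal_smul measurable_measure_Ici
          (ae_of_all _ fun s => measure_lt_top μ _)]

theorem IsHazardMeasure.memLp_two_compensator [IsFiniteMeasure μ] [SFinite ρ]
    (h : IsHazardMeasure ρ μ) {f : α → ℝ} (hfm : Measurable f) (hf : MemLp f 2 μ) :
    MemLp (compensator ρ f) 2 μ := by
  rw [memLp_two_iff_lintegral_sq_enorm_lt_top hfm.aestronglyMeasurable] at hf
  rw [memLp_two_iff_lintegral_sq_enorm_lt_top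
    (measurable_compensator hfm).aestronglyMeasurable]
  calc ∫⁻ t, ‖compensator ρ f t‖ₑ ^ 2 ∂μ ≤ ∫⁻ t, (∫⁻ s in Iic t, ‖f s‖ₑ ∂ρ) ^ 2 ∂μ := by
        gcongr with t
        exact enorm_integral_le_lintegral_enorm _
    _ ≤ 4 * ∫⁻ t, ‖f t‖ₑ ^ 2 ∂μ := h.lintegral_sq_setLIntegral_Iic_le hfm.enorm
    _ < ∞ := ENNReal.mul_lt_top (by finiteness) hf

theorem integral_mul_integral_eq_integral_compensator [SFinite ρ] [NullSingletonClass ρ]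
    {f g : α → ℝ} (hf : Integrable f ρ) (hg : Integrable g ρ) :
    (∫ s, f s ∂ρ) * ∫ s, g s ∂ρ
      = ∫ s, (f s * compensator ρ g s + g s * compensator ρ f s) ∂ρ := by
  set below : Set (α × α) := {p | p.2 ≤ p.1} with hbelow_def
  have hbelow : MeasurableSet below := measurableSet_le measurable_snd measurable_fst
  have hprod := hf.mul_prod hg
  have hlower := hprod.indicator hbelow
  have hupper := hprod.indicator hbelow.compl
  have hlower_fst (s : α) :
      ∫ u, below.indicator (fun p => f p.1 * g p.2) (s, u) ∂ρ = f s * compensator ρ g s := by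
    rw [compensator, ← integral_const_mul, ← integral_indicator measurableSet_Iic]
    rfl
  have hupper_snd (u : α) :
      ∫ s, belowᶜ.indicator (fun p => f p.1 * g p.2) (s, u) ∂ρ = g u * compensator ρ f u := by
    rw [compensator, ← integral_const_mul, ← setIntegral_congr_set Iio_ae_eq_Iic,
      ← integral_indicator measurableSet_Iio]
    refine integral_congr_ae (ae_of_all _ fun s => ?_)
    simp [Set.indicator_apply, hbelow_def, mul_comm]
  have hfst := hlower.integral_prod_left
  have hsnd := hupper.integral_prod_right
  simp only [hlower_fst] at hfst
  simp only [hupper_snd] at hsnd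
  rw [← integral_prod_mul, integral_add hfst hsnd]
  simp only [← hlower_fst, ← hupper_snd]
  rw [← integral_prod _ hlower, ← integral_prod_symm _ hupper, ← integral_add hlower hupper]
  simp only [Set.indicator_self_add_compl_apply]

theorem compensator_mul_compensator [SFinite ρ] [NullSingletonClass ρ] {f g : α → ℝ} {t : α}
    (hf : IntegrableOn f (Iic t) ρ) (hg : IntegrableOn g (Iic t) ρ) :
    compensator ρ f t * compensator ρ g t
      = compensator ρ (fun s => f s * compensator ρ g s + g s * compensator ρ f s) t := by
  have compensator_restrict {k : α → ℝ} {s : α} (hs : s ∈ Iic t) :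
      compensator (ρ.restrict (Iic t)) k s = compensator ρ k s := by
    rw [compensator, Measure.restrict_restrict measurableSet_Iic, Set.Iic_inter_Iic,
      min_eq_left hs, compensator]
  refine (integral_mul_integral_eq_integral_compensator hf hg).trans ?_
  refine setIntegral_congr_fun measurableSet_Iic fun s hs => ?_
  simp only [compensator_restrict hs]

theorem IsHazardMeasure.integral_sub_compensator_mul_sub_compensator [IsFiniteMeasure μ]
    [SFinite ρ] [NullSingletonClass ρ] (h : IsHazardMeasure ρ μ) {f g : α → ℝ}
    (hfm : Measurable f) (hgm : Measurable g) (hf : MemLp f 2 μ) (hg : MemLp g 2 μ) :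
    ∫ t, (f t - compensator ρ f t) * (g t - compensator ρ g t) ∂μ
      = ∫ t, compensator ρ (fun s => f s * g s) t ∂μ := by
  set F := compensator ρ f
  set G := compensator ρ g
  have hF : MemLp F 2 μ := h.memLp_two_compensator hfm hf
  have hG : MemLp G 2 μ := h.memLp_two_compensator hgm hg
  have hfg : Integrable (fun t => f t * g t) μ := hf.integrable_mul hg
  have hFG : Integrable (fun t => F t * G t) μ := hF.integrable_mul hG
  have hcross : Integrable (fun t => f t * G t + g t * F t) μ :=
    (hf.integrable_mul hG).add (hg.integrable_mul hF)
  have hdiff : Integrable (fun t => F t * G t - (f t * G t + g t * F t)) μ := hFG.sub hcross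
  have hcross_meas : Measurable fun t => f t * G t + g t * F t :=
    (hfm.mul (measurable_compensator hgm)).add (hgm.mul (measurable_compensator hfm))
  have hproduct : ∫ t, F t * G t ∂μ = ∫ t, (f t * G t + g t * F t) ∂μ := by
    rw [← h.integral_compensator hcross_meas hcross]
    refine integral_congr_ae ?_
    filter_upwards [h.ae_integrableOn_Iic hfm (hf.integrable one_le_two),
      h.ae_integrableOn_Iic hgm (hg.integrable one_le_two)] with t hft hgt
    exact compensator_mul_compensator hft hgt
  calc ∫ t, (f t - F t) * (g t - G t) ∂μ
      = ∫ t, (f t * g t + (F t * G t - (f t * G t + g t * F t))) ∂μ := by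
        congr with t; ring
    _ = ∫ t, f t * g t ∂μ + (∫ t, F t * G t ∂μ - ∫ t, (f t * G t + g t * F t) ∂μ) := by
        rw [integral_add hfg hdiff, integral_sub hFG hcross]
    _ = ∫ t, f t * g t ∂μ := by rw [hproduct, sub_self, add_zero]
    _ = ∫ t, compensator ρ (fun s => f s * g s) t ∂μ :=
        (h.integral_compensator (hfm.mul hgm) hfg).symm

end Hazard

theorem absolutelyContinuousOnInterval_comp_lipschitzOnWith {X Y : Type*} [PseudoMetricSpace X]
    [PseudoMetricSpace Y] {g : X → Y} {f : ℝ → X} {C : ℝ≥0} {s : Set X} {a b : ℝ}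
    (hg : LipschitzOnWith C g s) (hf : AbsolutelyContinuousOnInterval f a b)
    (hfs : Set.MapsTo f (uIcc a b) s) : AbsolutelyContinuousOnInterval (g ∘ f) a b := by
  have hbound := Tendsto.const_mul (C : ℝ) hf
  rw [mul_zero] at hbound
  refine squeeze_zero' (.of_forall fun _ => Finset.sum_nonneg fun _ _ => dist_nonneg) ?_ hbound
  filter_upwards [mem_inf_of_right (mem_principal_self _)] with E hE
  rw [Finset.mul_sum]
  exact Finset.sum_le_sum fun i hi =>
    hg.dist_le_mul _ (hfs (hE.1 i hi).1) _ (hfs (hE.1 i hi).2)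

theorem integral_deriv_comp_primitive_mul {k g : ℝ → ℝ} {a b : ℝ}
    (hk : IntervalIntegrable k volume a b) (hg : ContDiff ℝ 1 g) :
    ∫ x in a..b, deriv g (∫ s in a..x, k s) * k x = g (∫ s in a..b, k s) - g 0 := by
  set K : ℝ → ℝ := fun x => ∫ s in a..x, k s
  have hK : AbsolutelyContinuousOnInterval K a b :=
    hk.absolutelyContinuousOnInterval_intervalIntegral Set.left_mem_uIcc
  obtain ⟨C, hC⟩ := hg.locallyLipschitz.locallyLipschitzOn.exists_lipschitzOnWith_of_compact
    (isCompact_uIcc.image_of_continuousOn hK.continuousOn)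
  have hgK : AbsolutelyContinuousOnInterval (g ∘ K) a b :=
    absolutelyContinuousOnInterval_comp_lipschitzOnWith hC hK (Set.mapsTo_image K _)
  calc ∫ x in a..b, deriv g (K x) * k x = ∫ x in a..b, deriv (g ∘ K) x := by
        refine intervalIntegral.integral_congr_ae ?_
        filter_upwards [hk.ae_hasDerivAt_integral] with x hx hxab
        have hKx : HasDerivAt K (k x) x :=
          hx (Set.uIoc_subset_uIcc hxab) a Set.left_mem_uIcc
        exact ((hg.differentiable one_ne_zero _).hasDerivAt.comp x hKx).deriv.symm
    _ = g (K b) - g (K a) := hgK.integral_deriv_eq_sub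
    _ = g (K b) - g 0 := by simp only [K, intervalIntegral.integral_same]

theorem setIntegral_Ioc_mul_exp_neg_primitive {k : ℝ → ℝ} {a b : ℝ} (hab : a ≤ b)
    (hk : IntegrableOn k (Ioc a b)) :
    ∫ x in Ioc a b, k x * Real.exp (-∫ s in Ioc a x, k s)
      = 1 - Real.exp (-∫ s in Ioc a b, k s) := by
  have hsubst := integral_deriv_comp_primitive_mul
    ((intervalIntegrable_iff_integrableOn_Ioc_of_le hab).2 hk)
    (g := fun x => -Real.exp (-x)) (by fun_prop)
  have hderiv (x : ℝ) : deriv (fun x => -Real.exp (-x)) x = Real.exp (-x) := by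
    simpa using (hasDerivAt_neg x).exp.fun_neg.deriv
  simp only [hderiv, intervalIntegral.integral_of_le hab, neg_zero, Real.exp_zero] at hsubst
  rw [sub_eq_add_neg, add_comm, ← sub_neg_eq_add, ← hsubst]
  refine setIntegral_congr_fun measurableSet_Ioc fun x hx => ?_
  simp only [intervalIntegral.integral_of_le hx.1.le, mul_comm]

section HazardRate

variable {k : ℝ → ℝ}

/-- The measure on `ℝ` with density `k` on `(0, ∞)`: the hazard measure of a positive random time
whose hazard rate is `k`. Negative values of `k` count as `0`. -/
noncomputable def hazardMeasure (k : ℝ → ℝ) : Measure ℝ :=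
  (volume.restrict (Ioi 0)).withDensity fun s => ENNReal.ofReal (k s)

instance (k : ℝ → ℝ) : SFinite (hazardMeasure k) :=
  inferInstanceAs (SFinite ((volume.restrict (Ioi 0)).withDensity _))

instance (k : ℝ → ℝ) : NullSingletonClass (hazardMeasure k) :=
  inferInstanceAs (NullSingletonClass ((volume.restrict (Ioi 0)).withDensity _))

theorem compensator_hazardMeasure (hk : Measurable k) (hk_nonneg : ∀ s, 0 < s → 0 ≤ k s)
    (f : ℝ → ℝ) (t : ℝ) :
    compensator (hazardMeasure k) f t = ∫ s in Ioc 0 t, k s * f s := by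
  rw [compensator, hazardMeasure, setIntegral_withDensity_eq_setIntegral_toReal_smul
      hk.ennreal_ofReal (ae_of_all _ fun s => ENNReal.ofReal_lt_top) _ measurableSet_Iic,
    Measure.restrict_restrict measurableSet_Iic, Set.inter_comm, Set.Ioi_inter_Iic]
  refine setIntegral_congr_fun measurableSet_Ioc fun s hs => ?_
  simp only [ENNReal.toReal_ofReal (hk_nonneg s hs.1), smul_eq_mul]

theorem ae_pos_hazardMeasure (k : ℝ → ℝ) : ∀ᵐ s ∂hazardMeasure k, 0 < s :=
  (withDensity_absolutelyContinuous _ _).ae_le (ae_restrict_mem measurableSet_Ioi)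

/-- The survival function `t ↦ ℙ(T ≥ t)` of a positive random time with hazard rate `k`. -/
noncomputable def hazardSurvival (k : ℝ → ℝ) (t : ℝ) : ℝ :=
  Real.exp (-∫ s in Ioc 0 t, k s)

/-- The law of a positive random time with hazard rate `k`. It has total mass
`1 - exp (-∫ s in Ioi 0, k s)`, hence is a probability measure only if `k` has infinite mass. -/
noncomputable def hazardLaw (k : ℝ → ℝ) : Measure ℝ :=
  (hazardMeasure k).withDensity fun s => ENNReal.ofReal (hazardSurvival k s)

theorem measurable_hazardSurvival (hk : Measurable k) (hk_nonneg : ∀ s, 0 < s → 0 ≤ k s) :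
    Measurable (hazardSurvival k) := by
  have hcumulative : Measurable fun t => ∫ s in Ioc 0 t, k s := by
    simpa only [funext (compensator_hazardMeasure hk hk_nonneg _), mul_one] using
      measurable_compensator (ρ := hazardMeasure k) (measurable_const (a := (1 : ℝ)))
  exact hcumulative.neg.exp

theorem hazardSurvival_le_one (hk_nonneg : ∀ s, 0 < s → 0 ≤ k s) (t : ℝ) :
    hazardSurvival k t ≤ 1 :=
  Real.exp_le_one_iff.2 <| neg_nonpos.2 <|
    setIntegral_nonneg measurableSet_Ioc fun s hs => hk_nonneg s hs.1

theorem hazardLaw_eq_withDensity_restrict (hk : Measurable k)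
    (hk_nonneg : ∀ s, 0 < s → 0 ≤ k s) :
    hazardLaw k = (volume.restrict (Ioi 0)).withDensity fun s =>
      ENNReal.ofReal (k s * hazardSurvival k s) := by
  rw [hazardLaw, hazardMeasure, ← withDensity_mul _ hk.ennreal_ofReal
    (measurable_hazardSurvival hk hk_nonneg).ennreal_ofReal]
  simp only [Pi.mul_def, ENNReal.ofReal_mul' (Real.exp_nonneg _), hazardSurvival]

theorem hazardLaw_Iic (hk : Measurable k) (hk_nonneg : ∀ s, 0 < s → 0 ≤ k s)
    {t : ℝ} (ht : 0 ≤ t) (hk_int : IntegrableOn k (Ioc 0 t)) :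
    hazardLaw k (Iic t) = ENNReal.ofReal (1 - hazardSurvival k t) := by
  have hint : IntegrableOn (fun s => k s * hazardSurvival k s) (Ioc 0 t) :=
    hk_int.mul_bdd (c := 1) (measurable_hazardSurvival hk hk_nonneg).aestronglyMeasurable
      (ae_of_all _ fun s => by
        simpa only [hazardSurvival, Real.norm_eq_abs, Real.abs_exp] using
          hazardSurvival_le_one hk_nonneg s)
  have hnonneg : 0 ≤ᵐ[volume.restrict (Ioc 0 t)] fun s => k s * hazardSurvival k s :=
    (ae_restrict_mem measurableSet_Ioc).mono fun s hs =>
      mul_nonneg (hk_nonneg s hs.1) (Real.exp_nonneg _)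
  rw [hazardLaw_eq_withDensity_restrict hk hk_nonneg, withDensity_apply _ measurableSet_Iic,
    Measure.restrict_restrict measurableSet_Iic, Set.inter_comm, Set.Ioi_inter_Iic,
    ← ofReal_integral_eq_lintegral_ofReal hint hnonneg]
  exact congrArg ENNReal.ofReal (setIntegral_Ioc_mul_exp_neg_primitive ht hk_int)

instance (k : ℝ → ℝ) : NullSingletonClass (hazardLaw k) :=
  inferInstanceAs (NullSingletonClass ((hazardMeasure k).withDensity _))

theorem hazardLaw_Ici [IsProbabilityMeasure (hazardLaw k)] (hk : Measurable k)
    (hk_nonneg : ∀ s, 0 < s → 0 ≤ k s) {t : ℝ} (ht : 0 ≤ t) (hk_int : IntegrableOn k (Ioc 0 t)) :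
    hazardLaw k (Ici t) = ENNReal.ofReal (hazardSurvival k t) := by
  rw [← measure_congr Ioi_ae_eq_Ici, ← Set.compl_Iic, prob_compl_eq_one_sub measurableSet_Iic,
    hazardLaw_Iic hk hk_nonneg ht hk_int, ← ENNReal.ofReal_one,
    ← ENNReal.ofReal_sub _ (sub_nonneg.2 (hazardSurvival_le_one hk_nonneg t)), sub_sub_cancel]

theorem isHazardMeasure_hazardMeasure [IsProbabilityMeasure (hazardLaw k)]
    (hk : Measurable k) (hk_nonneg : ∀ s, 0 < s → 0 ≤ k s)
    (hk_int : ∀ t, IntegrableOn k (Ioc 0 t)) :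
    IsHazardMeasure (hazardMeasure k) (hazardLaw k) := by
  refine withDensity_congr_ae ?_
  filter_upwards [ae_pos_hazardMeasure k] with s hs
  exact (hazardLaw_Ici hk hk_nonneg hs.le (hk_int s)).symm

theorem withDensity_indicator_Ici_eq_hazardLaw (hk : Measurable k)
    (hk_nonneg : ∀ s, 0 < s → 0 ≤ k s) :
    (volume.withDensity fun t => ENNReal.ofReal
      ((Ici 0).indicator (fun s => k s * hazardSurvival k s) t)) = hazardLaw k := by
  rw [hazardLaw_eq_withDensity_restrict hk hk_nonneg,
    Measure.restrict_congr_set Ioi_ae_eq_Ici, ← withDensity_indicator measurableSet_Ici]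
  congr with t
  exact congrFun (Set.indicator_comp_of_zero ENNReal.ofReal_zero).symm t

end HazardRate

theorem stmt_14_general {Ω : Type*} [MeasurableSpace Ω] (P : Measure Ω) [IsProbabilityMeasure P]
    (T : Ω → ℝ) (hT : Measurable T)
    (lam : ℝ → ℝ) (hlam_meas : Measurable lam) (hlam_nn : ∀ t, 0 ≤ t → 0 ≤ lam t)
    (hlam_int : ∀ t : ℝ, IntegrableOn lam (Ioc (0 : ℝ) t))
    (Λ : ℝ → ℝ) (hΛ : ∀ t, Λ t = ∫ s in Ioc (0 : ℝ) t, lam s)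
    (hdens : Measure.map T P = volume.withDensity fun t =>
      ENNReal.ofReal ((Ici (0 : ℝ)).indicator (fun s => lam s * Real.exp (-Λ s)) t))
    (φ h : ℝ → ℝ) (hφm : Measurable φ) (hhm : Measurable h)
    (hφ : MemLp (fun ω => φ (T ω)) 2 P) (hh : MemLp (fun ω => h (T ω)) 2 P) :
    ∫ ω, ((φ (T ω) - ∫ s in Ioc (0 : ℝ) (T ω), lam s * φ s)
        * (h (T ω) - ∫ s in Ioc (0 : ℝ) (T ω), lam s * h s)) ∂P
      = ∫ ω, (∫ s in Ioc (0 : ℝ) (T ω), lam s * φ s * h s) ∂P := by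
  have hlam_nonneg (s : ℝ) (hs : 0 < s) : 0 ≤ lam s := hlam_nn s hs.le
  have hlaw : Measure.map T P = hazardLaw lam := by
    simp only [hdens, hΛ, ← withDensity_indicator_Ici_eq_hazardLaw hlam_meas hlam_nonneg,
      hazardSurvival]
  have : IsProbabilityMeasure (hazardLaw lam) :=
    hlaw ▸ Measure.isProbabilityMeasure_map hT.aemeasurable
  have hresidual {f : ℝ → ℝ} (hf : Measurable f) :
      Measurable fun t => f t - compensator (hazardMeasure lam) f t :=
    hf.sub (measurable_compensator hf)
  have hscore := (isHazardMeasure_hazardMeasure hlam_meas hlam_nonneg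
    hlam_int).integral_sub_compensator_mul_sub_compensator hφm hhm
    (by rwa [← hlaw, memLp_map_measure_iff hφm.aestronglyMeasurable hT.aemeasurable])
    (by rwa [← hlaw, memLp_map_measure_iff hhm.aestronglyMeasurable hT.aemeasurable])
  rw [← hlaw, integral_map hT.aemeasurable
      ((hresidual hφm).fun_mul (hresidual hhm)).aestronglyMeasurable,
    integral_map hT.aemeasurable
      (measurable_compensator (hφm.fun_mul hhm)).aestronglyMeasurable] at hscore
  simpa only [compensator_hazardMeasure hlam_meas hlam_nonneg, mul_assoc] using hscore

/-- Score covariance identity for the hazard log-likelihood: for a nonnegative random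
variable `T` with hazard `lam` and cumulative hazard `Λ` (so density `lam·exp(-Λ)` on
`[0,∞)`), `E[(φ(T) - ∫_0^T lam φ)(h(T) - ∫_0^T lam h)] = E[∫_0^T lam φ h]`. -/
theorem stmt_14 {Ω : Type*} [MeasurableSpace Ω] (P : Measure Ω) [IsProbabilityMeasure P]
    (T : Ω → ℝ) (hT : Measurable T) (hTnn : ∀ᵐ ω ∂P, 0 ≤ T ω)
    (lam : ℝ → ℝ) (hlam_meas : Measurable lam) (hlam_nn : ∀ t, 0 ≤ t → 0 ≤ lam t)
    (hlam_int : ∀ t : ℝ, IntegrableOn lam (Set.Ioc (0 : ℝ) t))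
    (Λ : ℝ → ℝ) (hΛ : ∀ t, Λ t = ∫ s in Set.Ioc (0 : ℝ) t, lam s)
    (hΛtop : Tendsto Λ atTop atTop)
    (hdens : Measure.map T P = volume.withDensity fun t =>
      ENNReal.ofReal ((Set.Ici (0 : ℝ)).indicator (fun s => lam s * Real.exp (-Λ s)) t))
    (φ h : ℝ → ℝ) (hφm : Measurable φ) (hhm : Measurable h)
    (Cφ Ch : ℝ) (hφb : ∀ t, |φ t| ≤ Cφ) (hhb : ∀ t, |h t| ≤ Ch) :
    ∫ ω, ((φ (T ω) - ∫ s in Set.Ioc (0 : ℝ) (T ω), lam s * φ s)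
        * (h (T ω) - ∫ s in Set.Ioc (0 : ℝ) (T ω), lam s * h s)) ∂P
      = ∫ ω, (∫ s in Set.Ioc (0 : ℝ) (T ω), lam s * φ s * h s) ∂P :=
  stmt_14_general P T hT lam hlam_meas hlam_nn hlam_int Λ hΛ hdens φ h hφm hhm
    (.of_bound (hφm.comp hT).aestronglyMeasurable Cφ (ae_of_all _ fun ω => hφb (T ω)))
    (.of_bound (hhm.comp hT).aestronglyMeasurable Ch (ae_of_all _ fun ω => hhb (T ω)))
end
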